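/- Let n ≥ 3 and let u, v ∈ ℤ^{2n} be integer vectors with ω(u, v) ≥ 2 such that the additive subgroup of ℝ² generated by the 2n column vectors (u_k, v_k), k = 1, …, 2n, equals ℤ². Set a₁ = ω(u, v). Then there exists γ ∈ Sp(2n, ℤ) such that the vectors u' = γu, v' = γv satisfy: u'₁ = a₁, u'₂ = 0, v'₁ = 0, v'₂ = 1 (i.e. the first 2×2 block M₁ equals [[a₁, 0], [0, 1]]), and for each j = 2, …, n one has u'_{2j} = 0, v'_{2j−1} = 0, v'_{2j} = 0 and 0 < u'_{2j−1} < a₁ (i.e. M_j = [[a_j, 0], [0, 0]] with 0 < a_j < a₁). -/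

import Mathlib

def idx1 (n : ℕ) (j : Fin n) : Fin (2 * n) :=
  ⟨2 * j.val, by have := j.isLt; omega⟩

def idx2 (n : ℕ) (j : Fin n) : Fin (2 * n) :=
  ⟨2 * j.val + 1, by have := j.isLt; omega⟩

def omegaJ {R : Type*} [CommRing R] (n : ℕ) (j : Fin n) (u v : Fin (2 * n) → R) : R :=
  u (idx1 n j) * v (idx2 n j) - u (idx2 n j) * v (idx1 n j)

def omegaForm {R : Type*} [CommRing R] (n : ℕ) (u v : Fin (2 * n) → R) : R :=
  ∑ j : Fin n, omegaJ n j u v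

def IsSymplectic {R : Type*} [CommRing R] (n : ℕ)
    (g : Matrix (Fin (2 * n)) (Fin (2 * n)) R) : Prop :=
  ∀ x y : Fin (2 * n) → R, omegaForm n (g.mulVec x) (g.mulVec y) = omegaForm n x y

section abstractPart
variable {M : Type*} [AddCommGroup M]

/-- A linear endomorphism preserving `B`. -/
def Pres (B : M →ₗ[ℤ] M →ₗ[ℤ] ℤ) (f : M →ₗ[ℤ] M) : Prop := ∀ x y, B (f x) (f y) = B x y

/-- Symplectic transvection. -/
def transv (B : M →ₗ[ℤ] M →ₗ[ℤ] ℤ) (c : ℤ) (w : M) : M →ₗ[ℤ] M :=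
  LinearMap.id + c • (B w).smulRight w

lemma transv_apply (B : M →ₗ[ℤ] M →ₗ[ℤ] ℤ) (c : ℤ) (w x : M) :
    transv B c w x = x + (c * B w x) • w := by
  simp [transv, mul_smul]
  rw [smul_comm]

lemma skew {B : M →ₗ[ℤ] M →ₗ[ℤ] ℤ} (hB : ∀ x, B x x = 0) (x y : M) : B x y = - B y x := by
  have h := hB (x + y)
  simp only [map_add, LinearMap.add_apply, hB] at h
  linarith

lemma transv_pres {B : M →ₗ[ℤ] M →ₗ[ℤ] ℤ} (hB : ∀ x, B x x = 0) (c : ℤ) (w : M) :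
    Pres B (transv B c w) := by
  intro x y
  simp only [transv_apply, map_add, map_smul, LinearMap.add_apply, LinearMap.smul_apply, hB,
    smul_eq_mul]
  rw [skew hB x w]
  ring

lemma pres_comp {B : M →ₗ[ℤ] M →ₗ[ℤ] ℤ} {f g : M →ₗ[ℤ] M} (hf : Pres B f) (hg : Pres B g) :
    Pres B (f.comp g) := by
  intro x y
  simp [hf (g x) (g y), hg x y]

lemma move {B : M →ₗ[ℤ] M →ₗ[ℤ] ℤ} (hB : ∀ x, B x x = 0) (x y : M) (h : B x y = 1) :
    ∃ f, Pres B f ∧ f x = y ∧ ∀ z, B x z = B y z → f z = z := by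
  refine ⟨transv B (-1) (y - x), transv_pres hB _ _, ?_, ?_⟩
  · rw [transv_apply]
    simp [hB, skew hB y x, h]
  · intro z hz
    rw [transv_apply]
    simp [hz]

lemma euclid {B : M →ₗ[ℤ] M →ₗ[ℤ] ℤ} (hB : ∀ x, B x x = 0) (p q : M) (h : B p q = 1) :
    ∀ (N : ℕ) (x : M), (B x p).natAbs + (B x q).natAbs ≤ N →
    ∃ f, Pres B f ∧ B (f x) p = 0 ∧ ∀ z, B p z = 0 → B q z = 0 → f z = z := by
  have hqp : B q p = -1 := by rw [skew hB, h]
  have step1 : ∀ c x, B (transv B c p x) p = B x p ∧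
      B (transv B c p x) q = B x q - c * B x p := by
    intro c x
    simp only [transv_apply, map_add, map_smul, LinearMap.add_apply, LinearMap.smul_apply, hB,
      smul_eq_mul, h]
    rw [skew hB p x]
    constructor <;> ring
  have step2 : ∀ c x, B (transv B c q x) p = B x p + c * B x q ∧
      B (transv B c q x) q = B x q := by
    intro c x
    simp only [transv_apply, map_add, map_smul, LinearMap.add_apply, LinearMap.smul_apply, hB,
      smul_eq_mul, hqp]
    rw [skew hB q x]
    constructor <;> ring
  have fix : ∀ c w z, B w z = 0 → transv B c w z = z := by
    intro c w z hz
    simp [transv_apply, hz]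
  intro N
  induction N using Nat.strong_induction_on with
  | _ N ih =>
  intro x hx
  by_cases hP : B x p = 0
  · exact ⟨LinearMap.id, fun _ _ => rfl, hP, fun _ _ _ => rfl⟩
  by_cases hQ : B x q = 0
  · refine ⟨(transv B 1 q).comp (transv B 1 p),
      pres_comp (transv_pres hB _ _) (transv_pres hB _ _), ?_, ?_⟩
    · rw [LinearMap.comp_apply, (step2 _ _).1, (step1 _ _).1, (step1 _ _).2, hQ]
      ring
    · intro z h1 h2
      rw [LinearMap.comp_apply, fix _ _ _ h1, fix _ _ _ h2]
  have key : ∀ c w, (w = p ∨ w = q) →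
      (B (transv B c w x) p).natAbs + (B (transv B c w x) q).natAbs < N →
      ∃ f, Pres B f ∧ B (f x) p = 0 ∧ ∀ z, B p z = 0 → B q z = 0 → f z = z := by
    intro c w hw hlt
    obtain ⟨f, hf, hf0, hfz⟩ := ih _ hlt (transv B c w x) le_rfl
    refine ⟨f.comp (transv B c w), pres_comp hf (transv_pres hB _ _), hf0, ?_⟩
    intro z h1 h2
    have : B w z = 0 := by rcases hw with rfl | rfl <;> assumption
    rw [LinearMap.comp_apply, fix _ _ _ this, hfz z h1 h2]
  by_cases hle : (B x p).natAbs ≤ (B x q).natAbs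
  · apply key (B x q / B x p) p (Or.inl rfl)
    rw [(step1 _ _).1, (step1 _ _).2]
    have e : B x q - B x q / B x p * B x p = B x q % B x p := by
      have := Int.emod_add_mul_ediv (B x q) (B x p)
      linarith [mul_comm (B x q / B x p) (B x p)]
    rw [e]
    have h1 := Int.emod_nonneg (B x q) hP
    have h2 := Int.emod_lt_abs (B x q) hP
    have h3 : |B x p| = ((B x p).natAbs : ℤ) := Int.abs_eq_natAbs _
    rw [h3] at h2
    generalize B x q % B x p = r at *
    clear e
    omega
  · apply key (-(B x p / B x q)) q (Or.inr rfl)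
    rw [(step2 _ _).1, (step2 _ _).2]
    have e : B x p + -(B x p / B x q) * B x q = B x p % B x q := by
      have := Int.emod_add_mul_ediv (B x p) (B x q)
      linarith [mul_comm (B x p / B x q) (B x q)]
    rw [e]
    have h1 := Int.emod_nonneg (B x p) hQ
    have h2 := Int.emod_lt_abs (B x p) hQ
    have h3 : |B x q| = ((B x q).natAbs : ℤ) := Int.abs_eq_natAbs _
    rw [h3] at h2
    generalize B x p % B x q = r at *
    clear e
    omega

lemma abstract_main {B : M →ₗ[ℤ] M →ₗ[ℤ] ℤ} (hB : ∀ x, B x x = 0)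
    (u v s0 s1 e f e' f' t : M) (a : ℤ) (ha : B u v = a)
    (hs0 : B v s0 = 1) (hs1u : B u s1 = 1) (hs1v : B v s1 = 0)
    (hef : B e f = 1) (hef' : B e' f' = 1)
    (h1 : B e' f = 0) (h2 : B f' f = 0)
    (ht0 : B e t = 0) (ht1 : B t f = a) (ht2 : B f' t = -1) :
    ∃ g, Pres B g ∧ g u = t ∧ g v = f := by
  obtain ⟨g1, p1, z1, -⟩ := euclid hB e f hef _ v le_rfl
  obtain ⟨g2, p2, z2, -⟩ := move hB (g1 v) (g1 s0 + (1 - B (g1 s0) f) • e) (by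
    rw [map_add, p1, hs0, map_smul, z1]; simp)
  obtain ⟨g3, p3, z3, -⟩ := move hB (g1 s0 + (1 - B (g1 s0) f) • e) f (by
    simp [hef])
  have hG := pres_comp p3 (pres_comp p2 p1)
  have hGv : (g3.comp (g2.comp g1)) v = f := by simp [z2, z3]
  generalize g3.comp (g2.comp g1) = G at hG hGv
  obtain ⟨g4, p4, z4, w4⟩ := euclid hB f' (-e') (by rw [map_neg, skew hB, hef']; rfl) _ (G u) le_rfl
  have hH := pres_comp p4 hG
  have hHv : (g4.comp G) v = f := by
    rw [LinearMap.comp_apply, hGv, w4 f h2 (by simp [h1])]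
  have hHu : B ((g4.comp G) u) f' = 0 := z4
  generalize g4.comp G = H at hH hHv hHu
  have a1 : B (H u) f = a := by rw [← hHv, hH, ha]
  have a2 : B (H u) (H s1) = 1 := by rw [hH, hs1u]
  have a3 : B f (H s1) = 0 := by rw [← hHv, hH, hs1v]
  have a3' : B (H s1) f = 0 := by rw [skew hB, a3]; rfl
  have hft : B f t = -a := by rw [skew hB, ht1]
  set s := H s1 + a • e + (B (H s1) t + B (H u) e * a - 1) • f' - (B (H u) e) • f with hs
  have b1 : B (H u) s = 1 := by
    simp only [hs, map_add, map_sub, map_smul, a2, hHu, a1, smul_eq_mul]; ring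
  have b2 : B s f = a := by
    simp [hs, a3', hef, h2, hB]
  have b3 : B s t = 1 := by
    simp [hs, ht0, ht2, hft]
    ring
  obtain ⟨g5, p5, z5, w5⟩ := move hB _ _ b1
  obtain ⟨g6, p6, z6, w6⟩ := move hB _ _ b3
  refine ⟨g6.comp (g5.comp H), pres_comp p6 (pres_comp p5 hH), ?_, ?_⟩
  · simp [z5, z6]
  · simp only [LinearMap.comp_apply, hHv]
    rw [w5 f (by rw [a1, b2]), w6 f (by rw [b2, ht1])]

end abstractPart

/-- The form as a bilinear map. -/
def omB (n : ℕ) : (Fin (2 * n) → ℤ) →ₗ[ℤ] (Fin (2 * n) → ℤ) →ₗ[ℤ] ℤ :=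
  LinearMap.mk₂ ℤ (omegaForm n)
    (by intro x y z; simp only [omegaForm, omegaJ, ← Finset.sum_add_distrib, Pi.add_apply]
        exact Finset.sum_congr rfl fun _ _ => by ring)
    (by intro c x z; simp only [omegaForm, omegaJ, Finset.mul_sum, Pi.smul_apply, smul_eq_mul]
        exact Finset.sum_congr rfl fun _ _ => by ring)
    (by intro x y z; simp only [omegaForm, omegaJ, ← Finset.sum_add_distrib, Pi.add_apply]
        exact Finset.sum_congr rfl fun _ _ => by ring)
    (by intro c x z; simp only [omegaForm, omegaJ, Finset.mul_sum, Pi.smul_apply, smul_eq_mul]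
        exact Finset.sum_congr rfl fun _ _ => by ring)

lemma omB_apply (n : ℕ) (x y : Fin (2 * n) → ℤ) : omB n x y = omegaForm n x y := rfl

lemma idx1_inj (n : ℕ) (i j : Fin n) : idx1 n i = idx1 n j ↔ i = j := by
  simp [idx1, Fin.ext_iff]

lemma idx2_inj (n : ℕ) (i j : Fin n) : idx2 n i = idx2 n j ↔ i = j := by
  simp [idx2, Fin.ext_iff]

lemma idx12 (n : ℕ) (i j : Fin n) : idx1 n i ≠ idx2 n j := by
  simp only [idx1, idx2, ne_eq, Fin.ext_iff]; omega

lemma idx21 (n : ℕ) (i j : Fin n) : idx2 n i ≠ idx1 n j := (idx12 n j i).symm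

lemma om_e (n : ℕ) (j : Fin n) (x : Fin (2 * n) → ℤ) :
    omB n (Pi.single (idx1 n j) 1) x = x (idx2 n j) := by
  simp [omB_apply, omegaForm, omegaJ, Pi.single_apply, idx1_inj, idx21]

lemma om_f (n : ℕ) (j : Fin n) (x : Fin (2 * n) → ℤ) :
    omB n (Pi.single (idx2 n j) 1) x = - x (idx1 n j) := by
  simp [omB_apply, omegaForm, omegaJ, Pi.single_apply, idx2_inj, idx12]

lemma omB_alt (n : ℕ) (x : Fin (2 * n) → ℤ) : omB n x x = 0 := by
  simp only [omB_apply, omegaForm, omegaJ]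
  exact Finset.sum_eq_zero fun _ _ => by ring

lemma functional (n : ℕ) (k : Fin (2 * n)) :
    ∃ s, ∀ x : Fin (2 * n) → ℤ, omB n x s = x k := by
  rcases Nat.even_or_odd' k.val with ⟨c, hc | hc⟩
  · have hcn : c < n := by have := k.isLt; omega
    refine ⟨Pi.single (idx2 n ⟨c, hcn⟩) 1, fun x => ?_⟩
    rw [skew (omB_alt n), om_f, neg_neg]
    congr 1
    exact Fin.ext hc.symm
  · have hcn : c < n := by have := k.isLt; omega
    refine ⟨-Pi.single (idx1 n ⟨c, hcn⟩) 1, fun x => ?_⟩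
    rw [map_neg, skew (omB_alt n), om_e, neg_neg]
    congr 1
    exact Fin.ext hc.symm

lemma functional_gen (n : ℕ) (u v : Fin (2 * n) → ℤ)
    (hgen : AddSubgroup.closure
      (Set.range fun k : Fin (2 * n) => ((u k, v k) : ℤ × ℤ)) = ⊤) (y : ℤ × ℤ) :
    ∃ s, (omB n u s, omB n v s) = y := by
  have hy : y ∈ AddSubgroup.closure
      (Set.range fun k : Fin (2 * n) => ((u k, v k) : ℤ × ℤ)) := by rw [hgen]; trivial
  induction hy using AddSubgroup.closure_induction with
  | mem x hx =>
    obtain ⟨k, rfl⟩ := hx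
    obtain ⟨s, hs⟩ := functional n k
    exact ⟨s, by simp [hs]⟩
  | zero => exact ⟨0, by simp⟩
  | add x y _ _ hx hy =>
    obtain ⟨s, rfl⟩ := hx
    obtain ⟨s', rfl⟩ := hy
    exact ⟨s + s', by simp⟩
  | neg x _ hx =>
    obtain ⟨s, rfl⟩ := hx
    exact ⟨-s, by simp⟩

/-- For `n ≥ 3` and integer vectors `u, v ∈ ℤ^{2n}` with
`a₁ = ω(u, v) ≥ 2` whose columns `(u_k, v_k)` generate `ℤ²`, there is
`γ ∈ Sp(2n, ℤ)` such that for `u' = γu, v' = γv`: the first block `M₁` equals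
`[[a₁, 0], [0, 1]]` and for each `j ≥ 2` the `j`-th block is `[[a_j, 0], [0, 0]]`
with `0 < a_j < a₁`. -/
theorem normalize_blocks_strict (n : ℕ) (hn : 3 ≤ n)
    (u v : Fin (2 * n) → ℤ) (hpos : 2 ≤ omegaForm n u v)
    (hgen : AddSubgroup.closure
      (Set.range fun k : Fin (2 * n) => ((u k, v k) : ℤ × ℤ)) = ⊤) :
    ∃ γ : Matrix (Fin (2 * n)) (Fin (2 * n)) ℤ,
      IsSymplectic n γ ∧
      γ.mulVec u (idx1 n (⟨0, by omega⟩ : Fin n)) = omegaForm n u v ∧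
      γ.mulVec u (idx2 n (⟨0, by omega⟩ : Fin n)) = 0 ∧
      γ.mulVec v (idx1 n (⟨0, by omega⟩ : Fin n)) = 0 ∧
      γ.mulVec v (idx2 n (⟨0, by omega⟩ : Fin n)) = 1 ∧
      ∀ j : Fin n, 1 ≤ j.val →
        γ.mulVec u (idx2 n j) = 0 ∧
        γ.mulVec v (idx1 n j) = 0 ∧
        γ.mulVec v (idx2 n j) = 0 ∧
        0 < γ.mulVec u (idx1 n j) ∧
        γ.mulVec u (idx1 n j) < omegaForm n u v := by
  obtain ⟨s0, hs0⟩ := functional_gen n u v hgen (0, 1)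
  obtain ⟨s1, hs1⟩ := functional_gen n u v hgen (1, 0)
  rw [Prod.mk.injEq] at hs0 hs1
  let j0 : Fin n := ⟨0, by omega⟩
  let j1 : Fin n := ⟨1, by omega⟩
  have hj : j1 ≠ j0 := by simp [j0, j1]
  let t : Fin (2 * n) → ℤ := fun k =>
    if k = idx1 n j0 then omegaForm n u v else if k.val % 2 = 0 then 1 else 0
  have t2 : ∀ j, t (idx2 n j) = 0 := by
    intro j
    simp only [t, idx21, if_false]
    rw [if_neg]
    simp only [idx2]; omega
  have t10 : t (idx1 n j0) = omegaForm n u v := by simp [t]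
  have t1 : ∀ j, j ≠ j0 → t (idx1 n j) = 1 := by
    intro j hj
    simp only [t, idx1_inj, hj, if_false]
    rw [if_pos]
    simp [idx1]
  obtain ⟨g, hg, hgu, hgv⟩ := abstract_main (omB_alt n) u v s0 s1
    (Pi.single (idx1 n j0) 1) (Pi.single (idx2 n j0) 1)
    (Pi.single (idx1 n j1) 1) (Pi.single (idx2 n j1) 1) t (omegaForm n u v) rfl
    hs0.2 hs1.1 hs1.2 (by simp [om_e]) (by simp [om_e])
    (by simp [om_e, Pi.single_apply, idx2_inj, hj]) (by simp [om_f, Pi.single_apply, idx12])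
    (by rw [om_e, t2]) (by rw [skew (omB_alt n), om_f, t10, neg_neg])
    (by rw [om_f, t1 _ hj])
  refine ⟨LinearMap.toMatrix' g, ?_, ?_⟩
  · intro x y
    rw [LinearMap.toMatrix'_mulVec, LinearMap.toMatrix'_mulVec]
    exact hg x y
  rw [LinearMap.toMatrix'_mulVec, LinearMap.toMatrix'_mulVec, hgu, hgv]
  refine ⟨t10, t2 _, by simp [Pi.single_apply, idx12], by simp [j0], ?_⟩
  intro j hj1
  have hjj : j ≠ j0 := by
    rintro rfl
    simp [j0] at hj1
  rw [t2, t1 j hjj]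
  refine ⟨rfl, by simp [Pi.single_apply, idx12], by simp [Pi.single_apply, idx2_inj, hjj],
    by norm_num, by omega⟩
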